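/- arXiv:1807.05801 — 2 statements merged into one kernel-verified Lean document; each statement's English description precedes it below -/
import Mathlib

section
/- Let (X_t)_{t∈ℝ} be a strictly stationary ℝ^n-valued process with E[‖X_0‖^p]^{1/p} ≤ C for some constant C > 0 and some p > 1. Let h : ℝ^n → ℝ^m be a map with h(0) = 0 whose components h_1,…,h_m are polynomial functions of total degree at most a, where a is an integer with 1 ≤ a < p, and define Y_t = h(X_t). If (X_t)_{t∈ℝ} is η-weakly dependent with coefficients (η_X(r))_{r≥0}, then (Y_t)_{t∈ℝ} is η-weakly dependent with coefficients η_Y(r) = 𝒞 · η_X(r)^{(p−a)/(p−1)} for some constant 𝒞 ≥ 0 independent of r. -/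
open MeasureTheory ProbabilityTheory Filter

noncomputable section

/-- Covariance of two real-valued random variables. -/
def cov {Ω : Type*} [MeasurableSpace Ω] (μ : Measure Ω) (U V : Ω → ℝ) : ℝ :=
  (∫ ω, U ω * V ω ∂μ) - (∫ ω, U ω ∂μ) * (∫ ω, V ω ∂μ)

/-- `L` is a (nonnegative) Lipschitz bound for `F` with respect to the distance
`δ₁(x,y) = ∑ i ‖x i - y i‖` on `Eᵘ`. -/
def Delta1Lip {E : Type*} [NormedAddCommGroup E] {u : ℕ} (F : (Fin u → E) → ℝ) (L : ℝ) : Prop :=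
  0 ≤ L ∧ ∀ x y : Fin u → E, |F x - F y| ≤ L * ∑ i, ‖x i - y i‖

/-- η-weak dependence of a process with coefficients `η` and constant `c₀`: `η r → 0` and the
covariance of Lipschitz functionals of the past and the future, separated by a time gap `r`,
is controlled by `c₀ (u Lip(F) + v Lip(G)) η(r)`. -/
def EtaWeaklyDependent {Ω : Type*} [MeasurableSpace Ω] (μ : Measure Ω)
    {E : Type*} [NormedAddCommGroup E] [MeasurableSpace E]
    (X : ℝ → Ω → E) (η : ℝ → ℝ) (c₀ : ℝ) : Prop :=
  0 ≤ c₀ ∧ (∀ r, 0 ≤ η r) ∧ Tendsto η atTop (nhds 0) ∧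
    ∀ (u v : ℕ), 0 < u → 0 < v → ∀ r : ℝ, 0 ≤ r →
      ∀ (i : Fin u → ℝ) (j : Fin v → ℝ), Monotone i → Monotone j →
        (∀ a b, i a + r ≤ j b) →
        ∀ (F : (Fin u → E) → ℝ) (G : (Fin v → E) → ℝ) (LF LG : ℝ),
          Measurable F → Measurable G →
          (∀ x, |F x| ≤ 1) → (∀ x, |G x| ≤ 1) →
          Delta1Lip F LF → Delta1Lip G LG →
          |cov μ (fun ω => F fun a => X (i a) ω) (fun ω => G fun b => X (j b) ω)| ≤
            c₀ * ((u : ℝ) * LF + (v : ℝ) * LG) * η r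

/-- Strict stationarity of an `ℝ`-indexed process: shifted finite-dimensional marginals have
the same distribution. -/
def StrictlyStationary {Ω : Type*} [MeasurableSpace Ω] (μ : Measure Ω)
    {E : Type*} [MeasurableSpace E] (X : ℝ → Ω → E) : Prop :=
  ∀ (s : ℝ) (u : ℕ) (t : Fin u → ℝ),
    IdentDistrib (fun ω (a : Fin u) => X (t a + s) ω) (fun ω (a : Fin u) => X (t a) ω) μ μ

/-!
Truncate at level `M`: on the ball of radius `M` a polynomial map `h` of degree `a` is Lipschitz
with constant `O(M ^ (a - 1))`, so for the truncated process the covariances are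
`O(M ^ (a - 1) * η r)`. By the `p`-th moment bound the truncation moves `h (X t)` by
`O(M ^ (a - p))` in mean, hence also the covariances. Balancing the two errors with
`M = η r ^ (-1 / (p - 1))` makes both of order `η r ^ ((p - a) / (p - 1))`.
-/

open scoped NNReal

section Covariance

variable {Ω : Type*} [MeasurableSpace Ω] {μ : Measure Ω} {U U' V V' : Ω → ℝ}

lemma cov_comm (μ : Measure Ω) (U V : Ω → ℝ) : cov μ U V = cov μ V U := by
  simp only [cov, mul_comm]

lemma cov_const [IsProbabilityMeasure μ] (b c : ℝ) : cov μ (fun _ => b) (fun _ => c) = 0 := by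
  simp [cov]

lemma cov_sub_left (hU : Integrable U μ) (hU' : Integrable U' μ)
    (hUV : Integrable (fun ω => U ω * V ω) μ) (hU'V : Integrable (fun ω => U' ω * V ω) μ) :
    cov μ (fun ω => U ω - U' ω) V = cov μ U V - cov μ U' V := by
  simp only [cov, sub_mul, integral_sub hU hU', integral_sub hUV hU'V]
  ring

lemma abs_cov_le_two_mul_integral_abs [IsProbabilityMeasure μ] (hU : Integrable U μ)
    (hV : ∀ ω, |V ω| ≤ 1) : |cov μ U V| ≤ 2 * ∫ ω, |U ω| ∂μ := by
  have hUV : |∫ ω, U ω * V ω ∂μ| ≤ ∫ ω, |U ω| ∂μ := by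
    refine norm_integral_le_of_norm_le (f := fun ω => U ω * V ω) hU.abs
      (Eventually.of_forall fun ω => ?_)
    rw [Real.norm_eq_abs, abs_mul]
    exact mul_le_of_le_one_right (abs_nonneg _) (hV ω)
  have hV' : |∫ ω, V ω ∂μ| ≤ 1 := by
    simpa using norm_integral_le_of_norm_le_const (μ := μ) (f := V) (C := 1)
      (Eventually.of_forall hV)
  calc |cov μ U V| ≤ |∫ ω, U ω * V ω ∂μ| + |∫ ω, U ω ∂μ| * |∫ ω, V ω ∂μ| := by
        rw [← abs_mul]
        exact abs_sub _ _
    _ ≤ ∫ ω, |U ω| ∂μ + (∫ ω, |U ω| ∂μ) * 1 := by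
        gcongr
        exact abs_integral_le_integral_abs
    _ = 2 * ∫ ω, |U ω| ∂μ := by ring

lemma abs_cov_sub_cov_le_of_abs_le_one [IsProbabilityMeasure μ]
    (hU : AEStronglyMeasurable U μ) (hU' : AEStronglyMeasurable U' μ)
    (hV : AEStronglyMeasurable V μ) (hV' : AEStronglyMeasurable V' μ)
    (hU1 : ∀ ω, |U ω| ≤ 1) (hU'1 : ∀ ω, |U' ω| ≤ 1)
    (hV1 : ∀ ω, |V ω| ≤ 1) (hV'1 : ∀ ω, |V' ω| ≤ 1) :
    |cov μ U V - cov μ U' V'| ≤ 2 * (∫ ω, |U ω - U' ω| ∂μ + ∫ ω, |V ω - V' ω| ∂μ) := by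
  have integrable_of_abs_le_one {W : Ω → ℝ} (hW : AEStronglyMeasurable W μ)
      (hW1 : ∀ ω, |W ω| ≤ 1) : Integrable W μ :=
    .of_bound hW 1 (Eventually.of_forall hW1)
  have hIU := integrable_of_abs_le_one hU hU1
  have hIU' := integrable_of_abs_le_one hU' hU'1
  have hIV := integrable_of_abs_le_one hV hV1
  have hIV' := integrable_of_abs_le_one hV' hV'1
  have hsplit : cov μ U V - cov μ U' V' =
      cov μ (fun ω => U ω - U' ω) V + cov μ (fun ω => V ω - V' ω) U' := by
    rw [cov_sub_left hIU hIU' (hIU.mul_bdd hV (Eventually.of_forall hV1))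
        (hIU'.mul_bdd hV (Eventually.of_forall hV1)),
      cov_sub_left hIV hIV' (hIV.mul_bdd hU' (Eventually.of_forall hU'1))
        (hIV'.mul_bdd hU' (Eventually.of_forall hU'1)),
      cov_comm μ V, cov_comm μ V']
    ring
  rw [hsplit, mul_add]
  exact (abs_add_le _ _).trans (add_le_add
    (abs_cov_le_two_mul_integral_abs (hIU.sub hIU') hV1)
    (abs_cov_le_two_mul_integral_abs (hIV.sub hIV') hU'1))

end Covariance

section TestFunction

variable {Ω : Type*} [MeasurableSpace Ω] {μ : Measure Ω}

lemma Delta1Lip.integral_abs_sub_le {E : Type*} [NormedAddCommGroup E] {u : ℕ} {L : ℝ}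
    {F : (Fin u → E) → ℝ} (hF : Delta1Lip F L) {y z : Fin u → Ω → E} {d : ℝ}
    (hint : ∀ k, Integrable (fun ω => ‖y k ω - z k ω‖) μ)
    (hd : ∀ k, ∫ ω, ‖y k ω - z k ω‖ ∂μ ≤ d) :
    ∫ ω, |(F fun k => y k ω) - F fun k => z k ω| ∂μ ≤ u * L * d := by
  have hL := hF.1
  calc ∫ ω, |(F fun k => y k ω) - F fun k => z k ω| ∂μ
      ≤ ∫ ω, L * ∑ k, ‖y k ω - z k ω‖ ∂μ :=
        integral_mono_of_nonneg (Eventually.of_forall fun _ => abs_nonneg _)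
          ((integrable_finsetSum _ fun k _ => hint k).const_mul L)
          (Eventually.of_forall fun _ => hF.2 _ _)
    _ = L * ∑ k, ∫ ω, ‖y k ω - z k ω‖ ∂μ := by
        rw [integral_const_mul, integral_finsetSum _ fun k _ => hint k]
    _ ≤ L * ∑ _k : Fin u, d := by
        gcongr with k
        exact hd k
    _ = u * L * d := by
        rw [Finset.sum_const, Finset.card_fin, nsmul_eq_mul]
        ring

variable {E E' : Type*} [NormedAddCommGroup E] [MeasurableSpace E]
  [NormedAddCommGroup E'] [MeasurableSpace E'] {u v : ℕ} {L : ℝ}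

/-- The functionals against which `EtaWeaklyDependent` is tested: measurable, bounded by `1`, and
Lipschitz with constant `L` for the distance `δ₁`. -/
structure IsTestFunction (F : (Fin u → E) → ℝ) (L : ℝ) : Prop where
  measurable : Measurable F
  abs_le_one : ∀ x, |F x| ≤ 1
  delta1Lip : Delta1Lip F L

lemma IsTestFunction.comp_lipschitzWith {F : (Fin u → E') → ℝ} (hF : IsTestFunction F L)
    {g : E → E'} (hg : Measurable g) {c : ℝ≥0} (hgc : LipschitzWith c g) :
    IsTestFunction (fun x : Fin u → E => F fun k => g (x k)) (c * L) where
  measurable := hF.measurable.comp (by fun_prop)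
  abs_le_one _ := hF.abs_le_one _
  delta1Lip := by
    have hL := hF.delta1Lip.1
    refine ⟨by positivity, fun x y => (hF.delta1Lip.2 _ _).trans ?_⟩
    calc L * ∑ k, ‖g (x k) - g (y k)‖ ≤ L * ∑ k, c * ‖x k - y k‖ := by
          gcongr
          exact hgc.norm_sub_le _ _
      _ = c * L * ∑ k, ‖x k - y k‖ := by
          rw [← Finset.mul_sum]
          ring

lemma IsTestFunction.abs_cov_sub_cov_le [IsProbabilityMeasure μ] {T : Type*} {Y Z : T → Ω → E}
    (hY : ∀ t, AEMeasurable (Y t) μ) (hZ : ∀ t, AEMeasurable (Z t) μ) {d : ℝ}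
    (hint : ∀ t, Integrable (fun ω => ‖Y t ω - Z t ω‖) μ)
    (hd : ∀ t, ∫ ω, ‖Y t ω - Z t ω‖ ∂μ ≤ d)
    {F : (Fin u → E) → ℝ} {G : (Fin v → E) → ℝ} {LF LG : ℝ}
    (hF : IsTestFunction F LF) (hG : IsTestFunction G LG) (i : Fin u → T) (j : Fin v → T) :
    |cov μ (fun ω => F fun k => Y (i k) ω) (fun ω => G fun l => Y (j l) ω) -
        cov μ (fun ω => F fun k => Z (i k) ω) (fun ω => G fun l => Z (j l) ω)| ≤
      2 * (u * LF + v * LG) * d := by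
  have hmeas {w : ℕ} {H : (Fin w → E) → ℝ} {L : ℝ} (hH : IsTestFunction H L) {W : T → Ω → E}
      (hW : ∀ t, AEMeasurable (W t) μ) (k : Fin w → T) :
      AEStronglyMeasurable (fun ω => H fun l => W (k l) ω) μ :=
    (hH.measurable.comp_aemeasurable
      (aemeasurable_pi_lambda _ fun l => hW (k l))).aestronglyMeasurable
  calc _ ≤ _ := abs_cov_sub_cov_le_of_abs_le_one (hmeas hF hY i) (hmeas hF hZ i) (hmeas hG hY j)
        (hmeas hG hZ j) (fun _ => hF.abs_le_one _) (fun _ => hF.abs_le_one _)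
        (fun _ => hG.abs_le_one _) (fun _ => hG.abs_le_one _)
    _ ≤ 2 * (u * LF * d + v * LG * d) := by
        gcongr
        · exact hF.delta1Lip.integral_abs_sub_le (fun k => hint (i k)) fun k => hd (i k)
        · exact hG.delta1Lip.integral_abs_sub_le (fun l => hint (j l)) fun l => hd (j l)
    _ = 2 * (u * LF + v * LG) * d := by ring

lemma EtaWeaklyDependent.comp_lipschitzWith {X : ℝ → Ω → E} {η : ℝ → ℝ} {c₀ : ℝ}
    (hX : EtaWeaklyDependent μ X η c₀) {g : E → E'} (hg : Measurable g) {c : ℝ≥0}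
    (hgc : LipschitzWith c g) :
    EtaWeaklyDependent μ (fun t ω => g (X t ω)) η (c₀ * c) := by
  obtain ⟨hc₀, hη, hη0, hcov⟩ := hX
  refine ⟨by positivity, hη, hη0, ?_⟩
  intro u v hu hv r hr i j hi hj hij F G LF LG hFm hGm hF1 hG1 hFL hGL
  have hF := IsTestFunction.comp_lipschitzWith ⟨hFm, hF1, hFL⟩ hg hgc
  have hG := IsTestFunction.comp_lipschitzWith ⟨hGm, hG1, hGL⟩ hg hgc
  refine (hcov u v hu hv r hr i j hi hj hij _ _ _ _ hF.measurable hG.measurable hF.abs_le_one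
    hG.abs_le_one hF.delta1Lip hG.delta1Lip).trans_eq ?_
  ring

end TestFunction

section RadialTruncation

lemma min_one_div_mul_self {r t : ℝ} (hr : 0 ≤ r) (ht : 0 ≤ t) : min 1 (r / t) * t = min t r := by
  obtain rfl | ht0 := eq_or_ne t 0
  · simpa using hr
  · rw [min_mul_of_nonneg _ _ ht, one_mul, div_mul_cancel₀ _ ht0]

variable {E : Type*} [NormedAddCommGroup E] [NormedSpace ℝ E] {M : ℝ≥0}

/-- The radial retraction of `E` onto the closed ball of radius `M`. The value `M / 0 = 0` at the
origin is harmless, since there the scalar multiplies `0`. -/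
def radialTruncation (M : ℝ≥0) (x : E) : E := min 1 (M / ‖x‖) • x

lemma norm_radialTruncation (M : ℝ≥0) (x : E) : ‖radialTruncation M x‖ = min ‖x‖ M := by
  rw [radialTruncation, norm_smul, Real.norm_of_nonneg (by positivity),
    min_one_div_mul_self M.coe_nonneg (norm_nonneg x)]

lemma radialTruncation_eq_self {x : E} (hx : ‖x‖ ≤ M) : radialTruncation M x = x := by
  obtain rfl | hx0 := eq_or_ne x 0
  · exact smul_zero _
  · rw [radialTruncation, min_eq_left ((one_le_div (norm_pos_iff.2 hx0)).2 hx), one_smul]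

lemma norm_sub_radialTruncation_le (M : ℝ≥0) (x : E) : ‖x - radialTruncation M x‖ ≤ ‖x‖ := by
  have hfactor : x - radialTruncation M x = (1 - min 1 (M / ‖x‖)) • x := by
    rw [radialTruncation, sub_smul, one_smul]
  have hscale : 0 ≤ min 1 (M / ‖x‖) := by positivity
  rw [hfactor, norm_smul, Real.norm_of_nonneg (sub_nonneg.2 (min_le_left _ _))]
  exact mul_le_of_le_one_left (norm_nonneg x) (by linarith)

lemma lipschitzWith_radialTruncation (M : ℝ≥0) :
    LipschitzWith 2 (radialTruncation M : E → E) := by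
  refine LipschitzWith.of_dist_le_mul fun x y => ?_
  wlog hyx : ‖y‖ ≤ ‖x‖ generalizing x y
  · rw [dist_comm, dist_comm x]
    exact this y x (le_of_not_ge hyx)
  set s := min 1 (M / ‖x‖)
  set t := min 1 (M / ‖y‖)
  have hs0 : 0 ≤ s := by positivity
  have hs1 : s ≤ 1 := min_le_left _ _
  have hnorm : ‖x‖ - ‖y‖ ≤ ‖x - y‖ := norm_sub_norm_le x y
  have hsx : s * ‖x‖ = min ‖x‖ M := min_one_div_mul_self M.coe_nonneg (norm_nonneg x)
  have hty : t * ‖y‖ = min ‖y‖ M := min_one_div_mul_self M.coe_nonneg (norm_nonneg y)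
  have hty_le : t * ‖y‖ ≤ s * ‖x‖ := by
    rw [hsx, hty]
    exact min_le_min_right _ hyx
  have hsy_le : s * ‖y‖ ≤ t * ‖y‖ := by
    rw [hty]
    exact le_min (mul_le_of_le_one_left (norm_nonneg y) hs1)
      ((mul_le_mul_of_nonneg_left hyx hs0).trans (hsx.trans_le (min_le_right _ _)))
  have hdecomp : radialTruncation M x - radialTruncation M y = s • (x - y) + (s - t) • y := by
    simp only [radialTruncation, s, t]
    module
  rw [dist_eq_norm, dist_eq_norm, hdecomp]
  calc ‖s • (x - y) + (s - t) • y‖ ≤ s * ‖x - y‖ + |s - t| * ‖y‖ := by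
        refine (norm_add_le _ _).trans_eq ?_
        rw [norm_smul, norm_smul, Real.norm_of_nonneg hs0, Real.norm_eq_abs]
    _ = s * ‖x - y‖ + (t * ‖y‖ - s * ‖y‖) := by
        rw [← abs_of_nonneg (norm_nonneg y), ← abs_mul, abs_of_nonneg (norm_nonneg y), sub_mul,
          abs_sub_comm, abs_of_nonneg (sub_nonneg.2 hsy_le)]
    _ ≤ s * ‖x - y‖ + s * (‖x‖ - ‖y‖) := by linarith
    _ ≤ 1 * ‖x - y‖ + 1 * ‖x - y‖ := by gcongr
    _ = ((2 : ℝ≥0) : ℝ) * ‖x - y‖ := by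
        push_cast
        ring

end RadialTruncation

section LipschitzGrowth

variable {E E' : Type*} [NormedAddCommGroup E] [NormedAddCommGroup E'] {K : ℝ≥0} {a p : ℝ}
  {h : E → E'}

/-- `h` is locally Lipschitz with constants growing at most like the power `a - 1` of the radius,
as for a polynomial map of degree `a`. Radii below `1` are left out because constants of order
`R ^ (a - 1)` near `0` would rule out linear terms when `1 < a`. -/
def LipschitzGrowthWith (K : ℝ≥0) (a : ℝ) (h : E → E') : Prop :=
  ∀ R : ℝ≥0, 1 ≤ R → LipschitzOnWith (K * R ^ (a - 1)) h (Metric.closedBall 0 R)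

namespace LipschitzGrowthWith

lemma norm_sub_le (hh : LipschitzGrowthWith K a h) {R : ℝ} (hR : 1 ≤ R) {x y : E}
    (hx : ‖x‖ ≤ R) (hy : ‖y‖ ≤ R) : ‖h x - h y‖ ≤ K * R ^ (a - 1) * ‖x - y‖ := by
  lift R to ℝ≥0 using by linarith
  simpa using (hh R (by exact_mod_cast hR)).norm_sub_le (by simpa using hx) (by simpa using hy)

protected lemma continuous (hh : LipschitzGrowthWith K a h) : Continuous h := by
  refine LocallyLipschitz.continuous fun x => ⟨_, Metric.closedBall 0 (‖x‖₊ + 1 : ℝ≥0), ?_,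
    hh (‖x‖₊ + 1) le_add_self⟩
  refine Metric.closedBall_mem_nhds_of_mem ?_
  simp

lemma norm_sub_le_mul_rpow (hh : LipschitzGrowthWith K a h) {x y : E} (hx : 1 ≤ ‖x‖)
    (hy : ‖y‖ ≤ ‖x‖) (hxy : ‖x - y‖ ≤ ‖x‖) : ‖h x - h y‖ ≤ K * ‖x‖ ^ a := by
  calc ‖h x - h y‖ ≤ K * ‖x‖ ^ (a - 1) * ‖x - y‖ := hh.norm_sub_le hx le_rfl hy
    _ ≤ K * ‖x‖ ^ (a - 1) * ‖x‖ := by gcongr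
    _ = K * ‖x‖ ^ a := by
        rw [mul_assoc, ← Real.rpow_add_one (by positivity), sub_add_cancel]

lemma norm_sub_apply_zero_le (hh : LipschitzGrowthWith K a h) (hap : a ≤ p) (x : E) :
    ‖h x - h 0‖ ≤ K + K * ‖x‖ ^ p := by
  obtain hx | hx := le_total ‖x‖ 1
  · have hball := hh.norm_sub_le le_rfl hx (norm_zero.trans_le zero_le_one)
    rw [Real.one_rpow, mul_one, sub_zero] at hball
    calc ‖h x - h 0‖ ≤ K * ‖x‖ := hball
      _ ≤ K := mul_le_of_le_one_right K.coe_nonneg hx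
      _ ≤ K + K * ‖x‖ ^ p := le_add_of_nonneg_right (by positivity)
  · calc ‖h x - h 0‖ ≤ K * ‖x‖ ^ a := hh.norm_sub_le_mul_rpow hx (by simp) (by simp)
      _ ≤ K * ‖x‖ ^ p := by gcongr
      _ ≤ K + K * ‖x‖ ^ p := le_add_of_nonneg_left K.coe_nonneg

variable [NormedSpace ℝ E] {M : ℝ≥0}

lemma norm_sub_comp_radialTruncation_le (hh : LipschitzGrowthWith K a h) (hM : 1 ≤ M) (hap : a ≤ p)
    (x : E) : ‖h x - h (radialTruncation M x)‖ ≤ K * M ^ (a - p) * ‖x‖ ^ p := by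
  obtain hx | hx := le_or_gt ‖x‖ M
  · rw [radialTruncation_eq_self hx, sub_self, norm_zero]
    positivity
  · have hM1 : (1 : ℝ) ≤ M := by exact_mod_cast hM
    have hM0 : (0 : ℝ) < M := by linarith
    calc ‖h x - h (radialTruncation M x)‖ ≤ K * ‖x‖ ^ a :=
          hh.norm_sub_le_mul_rpow (hM1.trans hx.le)
            ((norm_radialTruncation M x).trans_le (min_le_left _ _))
            (norm_sub_radialTruncation_le M x)
      _ = K * ‖x‖ ^ (a - p) * ‖x‖ ^ p := by
          rw [mul_assoc, ← Real.rpow_add (hM0.trans hx), sub_add_cancel]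
      _ ≤ K * M ^ (a - p) * ‖x‖ ^ p := by
          have := Real.rpow_le_rpow_of_nonpos hM0 hx.le (sub_nonpos.2 hap)
          gcongr

lemma lipschitzWith_comp_radialTruncation (hh : LipschitzGrowthWith K a h) (hM : 1 ≤ M) :
    LipschitzWith (K * M ^ (a - 1) * 2) fun x => h (radialTruncation M x) := by
  rw [← lipschitzOnWith_univ]
  refine (hh M hM).comp (lipschitzWith_radialTruncation M).lipschitzOnWith fun x _ => ?_
  rw [mem_closedBall_zero_iff, norm_radialTruncation]
  exact min_le_right _ _

end LipschitzGrowthWith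

lemma LipschitzGrowthWith.toEuclideanSpace {κ : Type*} [Fintype κ] {h : E → EuclideanSpace ℝ κ}
    {K : κ → ℝ≥0} (hh : ∀ s, LipschitzGrowthWith (K s) a fun x => h x s) :
    LipschitzGrowthWith (∑ s, K s) a h := by
  refine fun R hR => LipschitzOnWith.of_dist_le_mul fun x hx y hy => ?_
  rw [dist_eq_norm, dist_eq_norm]
  calc ‖h x - h y‖ ≤ ∑ s, ‖(h x - h y) s‖ := by
        rw [EuclideanSpace.norm_eq]
        exact Real.sqrt_le_iff.2 ⟨by positivity,
          Finset.sum_sq_le_sq_sum_of_nonneg fun _ _ => norm_nonneg _⟩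
    _ ≤ ∑ s, ↑(K s * R ^ (a - 1)) * ‖x - y‖ := by
        gcongr with s
        exact (hh s R hR).norm_sub_le hx hy
    _ = ↑((∑ s, K s) * R ^ (a - 1)) * ‖x - y‖ := by
        push_cast
        rw [Finset.sum_mul, Finset.sum_mul]

end LipschitzGrowth

section Polynomial

lemma abs_prod_map_sub_prod_map_le {ι : Type*} (s : Multiset ι) {x y : ι → ℝ} {R δ : ℝ}
    (hR : 0 ≤ R) (hδ : 0 ≤ δ)
    (hx : ∀ i, |x i| ≤ R) (hy : ∀ i, |y i| ≤ R) (hxy : ∀ i, |x i - y i| ≤ δ) :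
    |(s.map x).prod - (s.map y).prod| ≤ s.card * R ^ (s.card - 1) * δ := by
  classical
  have hprod (z : ι → ℝ) :
      (s.map z).prod = ContinuousMultilinearMap.mkPiAlgebra ℝ s ℝ fun i => z i := by
    rw [ContinuousMultilinearMap.mkPiAlgebra_apply, Finset.prod_eq_multiset_prod,
      s.map_univ]
  have hx' : ‖fun i : s => x i‖ ≤ R := (pi_norm_le_iff_of_nonneg hR).2 fun i => hx i
  have hy' : ‖fun i : s => y i‖ ≤ R := (pi_norm_le_iff_of_nonneg hR).2 fun i => hy i
  have hxy' : ‖(fun i : s => x i) - fun i : s => y i‖ ≤ δ :=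
    (pi_norm_le_iff_of_nonneg hδ).2 fun i => hxy i
  rw [hprod, hprod, ← Real.norm_eq_abs]
  refine (ContinuousMultilinearMap.norm_image_sub_le _ _ _).trans ?_
  rw [ContinuousMultilinearMap.norm_mkPiAlgebra, one_mul, Multiset.card_coe]
  gcongr
  exact max_le hx' hy'

lemma natCast_mul_pow_pred_le_mul_rpow {k a : ℕ} (hka : k ≤ a) {R : ℝ} (hR : 1 ≤ R) :
    k * R ^ (k - 1) ≤ a * R ^ ((a : ℝ) - 1) := by
  obtain _ | k := k
  · simp only [Nat.cast_zero, zero_mul]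
    positivity
  · have hexp : (k : ℝ) ≤ a - 1 := by
      rw [le_sub_iff_add_le]
      exact_mod_cast hka
    rw [Nat.add_sub_cancel, ← Real.rpow_natCast R k]
    gcongr

variable {ι κ : Type*} [Fintype ι] [Fintype κ]

lemma lipschitzGrowthWith_eval {a : ℕ} (Q : MvPolynomial ι ℝ) (hQ : Q.totalDegree ≤ a) :
    LipschitzGrowthWith ((∑ d ∈ Q.support, ‖Q.coeff d‖₊) * a) a
      fun x : EuclideanSpace ℝ ι => MvPolynomial.eval (fun i => x i) Q := by
  classical
  have heval (x : EuclideanSpace ℝ ι) : MvPolynomial.eval (fun i => x i) Q =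
      ∑ d ∈ Q.support, Q.coeff d * (d.toMultiset.map fun i => x i).prod := by
    simp only [MvPolynomial.eval_eq, Finset.prod_multiset_map_count, Finsupp.toFinset_toMultiset,
      Finsupp.count_toMultiset]
  refine fun R hR => LipschitzOnWith.of_dist_le_mul fun x hx y hy => ?_
  rw [mem_closedBall_zero_iff] at hx hy
  have hmonomial (d) (hd : d ∈ Q.support) :
      |(d.toMultiset.map fun i => x i).prod - (d.toMultiset.map fun i => y i).prod| ≤
        a * (R : ℝ) ^ ((a : ℝ) - 1) * ‖x - y‖ := by
    have hcard : d.toMultiset.card ≤ a := by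
      rw [Finsupp.card_toMultiset]
      exact (MvPolynomial.le_totalDegree hd).trans hQ
    refine (abs_prod_map_sub_prod_map_le _ R.coe_nonneg (norm_nonneg (x - y))
      (fun i => (PiLp.norm_apply_le x i).trans hx) (fun i => (PiLp.norm_apply_le y i).trans hy)
      (fun i => PiLp.norm_apply_le (x - y) i)).trans ?_
    gcongr ?_ * _
    exact natCast_mul_pow_pred_le_mul_rpow hcard (by exact_mod_cast hR)
  rw [Real.dist_eq, dist_eq_norm, heval, heval, ← Finset.sum_sub_distrib]
  calc _ ≤ ∑ d ∈ Q.support, |Q.coeff d| * (a * (R : ℝ) ^ ((a : ℝ) - 1) * ‖x - y‖) := by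
        refine (Finset.abs_sum_le_sum_abs _ _).trans (Finset.sum_le_sum fun d hd => ?_)
        rw [← mul_sub, abs_mul]
        exact mul_le_mul_of_nonneg_left (hmonomial d hd) (abs_nonneg _)
    _ = _ := by
        rw [← Finset.sum_mul]
        push_cast
        simp only [Real.norm_eq_abs]
        ring

lemma lipschitzGrowthWith_of_eval {a : ℕ} {h : EuclideanSpace ℝ ι → EuclideanSpace ℝ κ}
    {P : κ → MvPolynomial ι ℝ} (hdeg : ∀ s, (P s).totalDegree ≤ a)
    (hP : ∀ x s, h x s = MvPolynomial.eval (fun i => x i) (P s)) :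
    LipschitzGrowthWith (∑ s, (∑ d ∈ (P s).support, ‖(P s).coeff d‖₊) * a) a h :=
  .toEuclideanSpace fun s => by simpa only [hP] using lipschitzGrowthWith_eval (P s) (hdeg s)

end Polynomial

section Heredity

variable {Ω : Type*} [MeasurableSpace Ω] {μ : Measure Ω}

lemma StrictlyStationary.identDistrib {E : Type*} [MeasurableSpace E] {X : ℝ → Ω → E}
    (hX : StrictlyStationary μ X) (s t : ℝ) : IdentDistrib (X s) (X t) μ μ := by
  simpa [Function.comp_def] using
    (hX (s - t) 1 fun _ => t).comp (measurable_pi_apply (0 : Fin 1))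

/-- The balancing choice `M = η ^ (-1 / (p - 1))` is at least `1` only if `η ≤ 1`; for larger `η`
the bound `hC` takes over. -/
lemma le_mul_rpow_of_forall_one_le {a p η x A B C : ℝ} (hp : 1 < p) (hap : a < p) (hη : 0 ≤ η)
    (hA : 0 ≤ A) (hB : 0 ≤ B) (hC0 : 0 ≤ C) (hC : x ≤ C)
    (hM : ∀ M : ℝ, 1 ≤ M → x ≤ A * (M ^ (a - 1) * η) + B * M ^ (a - p)) :
    x ≤ (A + B + C) * η ^ ((p - a) / (p - 1)) := by
  have hp1 : 0 < p - 1 := sub_pos.2 hp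
  have hθ : 0 < (p - a) / (p - 1) := div_pos (sub_pos.2 hap) hp1
  obtain hη1 | hη1 := lt_or_ge 1 η
  · calc x ≤ C := hC
      _ ≤ A + B + C := by linarith
      _ ≤ (A + B + C) * η ^ ((p - a) / (p - 1)) :=
        le_mul_of_one_le_right (by positivity) (Real.one_le_rpow hη1.le hθ.le)
  obtain rfl | hη0 := hη.eq_or_lt
  · rw [Real.zero_rpow hθ.ne', mul_zero]
    have htail : Tendsto (fun M : ℝ => B * M ^ (a - p)) atTop (nhds 0) := by
      simpa only [neg_sub, mul_zero] using
        (tendsto_rpow_neg_atTop (sub_pos.2 hap)).const_mul B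
    refine ge_of_tendsto htail ?_
    filter_upwards [eventually_ge_atTop 1] with M hM1
    simpa using hM M hM1
  · have hM1 : 1 ≤ η ^ (-1 / (p - 1)) := Real.one_le_rpow_of_pos_of_le_one_of_nonpos hη0 hη1
      (div_nonpos_of_nonpos_of_nonneg (by norm_num) hp1.le)
    have hlip : (η ^ (-1 / (p - 1))) ^ (a - 1) * η = η ^ ((p - a) / (p - 1)) := by
      rw [← Real.rpow_mul hη, ← Real.rpow_add_one hη0.ne']
      congr 1
      field_simp
      ring
    have htail : (η ^ (-1 / (p - 1))) ^ (a - p) = η ^ ((p - a) / (p - 1)) := by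
      rw [← Real.rpow_mul hη]
      congr 1
      ring
    calc x ≤ A * η ^ ((p - a) / (p - 1)) + B * η ^ ((p - a) / (p - 1)) := by
          simpa only [hlip, htail] using hM _ hM1
      _ ≤ (A + B + C) * η ^ ((p - a) / (p - 1)) := by
          rw [← add_mul]
          exact mul_le_mul_of_nonneg_right (le_add_of_nonneg_right hC0) (by positivity)

variable [IsProbabilityMeasure μ] {E E' : Type*} [NormedAddCommGroup E] [MeasurableSpace E]
  [OpensMeasurableSpace E] [NormedAddCommGroup E'] [MeasurableSpace E'] [BorelSpace E']

lemma IsTestFunction.abs_cov_comp_sub_cov_comp_le {T : Type*} {X : T → Ω → E}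
    (hXm : ∀ t, AEMeasurable (X t) μ) {p B : ℝ} (hint : ∀ t, Integrable (fun ω => ‖X t ω‖ ^ p) μ)
    (hB : ∀ t, ∫ ω, ‖X t ω‖ ^ p ∂μ ≤ B) {f g : E → E'} (hf : Continuous f) (hg : Continuous g)
    {α β : ℝ} (hβ : 0 ≤ β) (hfg : ∀ x, ‖f x - g x‖ ≤ α + β * ‖x‖ ^ p)
    {u v : ℕ} {F : (Fin u → E') → ℝ} {G : (Fin v → E') → ℝ} {LF LG : ℝ}
    (hF : IsTestFunction F LF) (hG : IsTestFunction G LG) (i : Fin u → T) (j : Fin v → T) :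
    |cov μ (fun ω => F fun k => f (X (i k) ω)) (fun ω => G fun l => f (X (j l) ω)) -
        cov μ (fun ω => F fun k => g (X (i k) ω)) (fun ω => G fun l => g (X (j l) ω))| ≤
      2 * (u * LF + v * LG) * (α + β * B) := by
  have hbound (t : T) : Integrable (fun ω => α + β * ‖X t ω‖ ^ p) μ :=
    (integrable_const α).add ((hint t).const_mul β)
  have hdiff (t : T) : Integrable (fun ω => ‖f (X t ω) - g (X t ω)‖) μ :=
    (hbound t).mono' ((hf.sub hg).norm.measurable.comp_aemeasurable (hXm t)).aestronglyMeasurable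
      (Eventually.of_forall fun ω => (norm_norm _).trans_le (hfg _))
  refine hF.abs_cov_sub_cov_le (Y := fun t ω => f (X t ω)) (Z := fun t ω => g (X t ω))
    (fun t => hf.measurable.comp_aemeasurable (hXm t))
    (fun t => hg.measurable.comp_aemeasurable (hXm t)) hdiff (fun t => ?_) hG i j
  calc ∫ ω, ‖f (X t ω) - g (X t ω)‖ ∂μ ≤ ∫ ω, (α + β * ‖X t ω‖ ^ p) ∂μ :=
        integral_mono (hdiff t) (hbound t) fun ω => hfg _
    _ = α + β * ∫ ω, ‖X t ω‖ ^ p ∂μ := by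
        rw [integral_add (integrable_const α) ((hint t).const_mul β), integral_const_mul]
        simp
    _ ≤ α + β * B := by
        gcongr
        exact hB t

theorem EtaWeaklyDependent.comp_lipschitzGrowthWith [NormedSpace ℝ E] {X : ℝ → Ω → E}
    {η : ℝ → ℝ} {c₀ : ℝ} (hX : EtaWeaklyDependent μ X η c₀) (hXm : ∀ t, AEMeasurable (X t) μ)
    {a p B : ℝ} (hp : 1 < p) (hap : a < p) (hint : ∀ t, Integrable (fun ω => ‖X t ω‖ ^ p) μ)
    (hB : ∀ t, ∫ ω, ‖X t ω‖ ^ p ∂μ ≤ B) {h : E → E'} {K : ℝ≥0}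
    (hh : LipschitzGrowthWith K a h) :
    EtaWeaklyDependent μ (fun t ω => h (X t ω)) (fun r => η r ^ ((p - a) / (p - 1)))
      (2 * K * (c₀ + 2 * B + 1)) := by
  obtain ⟨hc₀, hη, hη0, -⟩ := id hX
  have hB0 : 0 ≤ B := (integral_nonneg fun ω => by positivity).trans (hB 0)
  have hθ : 0 < (p - a) / (p - 1) := div_pos (sub_pos.2 hap) (sub_pos.2 hp)
  refine ⟨by positivity, fun r => Real.rpow_nonneg (hη r) _, ?_, ?_⟩
  · simpa only [Real.zero_rpow hθ.ne'] using hη0.rpow_const (Or.inr hθ.le)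
  intro u v hu hv r hr i j hi hj hij F G LF LG hFm hGm hF1 hG1 hFL hGL
  have hF : IsTestFunction F LF := ⟨hFm, hF1, hFL⟩
  have hG : IsTestFunction G LG := ⟨hGm, hG1, hGL⟩
  set S := (u : ℝ) * LF + v * LG
  have hS0 : 0 ≤ S := add_nonneg (mul_nonneg u.cast_nonneg hFL.1) (mul_nonneg v.cast_nonneg hGL.1)
  have hcrude : |cov μ (fun ω => F fun k => h (X (i k) ω)) fun ω => G fun l => h (X (j l) ω)| ≤
      2 * S * (K + K * B) := by
    simpa only [cov_const, sub_zero] using hF.abs_cov_comp_sub_cov_comp_le hXm hint hB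
      hh.continuous continuous_const K.coe_nonneg (hh.norm_sub_apply_zero_le hap.le) hG i j
  have htrunc (M : ℝ) (hM : 1 ≤ M) :
      |cov μ (fun ω => F fun k => h (X (i k) ω)) fun ω => G fun l => h (X (j l) ω)| ≤
        2 * K * c₀ * S * (M ^ (a - 1) * η r) + 2 * K * B * S * M ^ (a - p) := by
    lift M to ℝ≥0 using by linarith
    have hM' : 1 ≤ M := by exact_mod_cast hM
    have hlip := hh.lipschitzWith_comp_radialTruncation hM'
    have herror := hF.abs_cov_comp_sub_cov_comp_le hXm hint hB hh.continuous hlip.continuous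
      (α := 0) (β := K * M ^ (a - p)) (by positivity)
      (by simpa only [zero_add] using hh.norm_sub_comp_radialTruncation_le hM' hap.le) hG i j
    have hdep := (hX.comp_lipschitzWith hlip.continuous.measurable hlip).2.2.2
      u v hu hv r hr i j hi hj hij F G LF LG hFm hGm hF1 hG1 hFL hGL
    refine (sub_le_iff_le_add'.1 (abs_sub_abs_le_abs_sub _ _)).trans
      ((add_le_add hdep herror).trans_eq ?_)
    push_cast
    ring
  refine (le_mul_rpow_of_forall_one_le hp hap (hη r) (by positivity) (by positivity)
    (by positivity) hcrude htrunc).trans_eq ?_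
  ring

theorem eta_hereditary_polynomial_general {ι κ : Type*} [Fintype ι] [Fintype κ]
    {X : ℝ → Ω → EuclideanSpace ℝ ι} {η : ℝ → ℝ} {c₀ : ℝ} (hX : EtaWeaklyDependent μ X η c₀)
    (hXm : ∀ t, AEMeasurable (X t) μ) {a : ℕ} {p B : ℝ} (hp : 1 < p) (hap : a < p)
    (hint : ∀ t, Integrable (fun ω => ‖X t ω‖ ^ p) μ) (hB : ∀ t, ∫ ω, ‖X t ω‖ ^ p ∂μ ≤ B)
    (h : EuclideanSpace ℝ ι → EuclideanSpace ℝ κ) (P : κ → MvPolynomial ι ℝ)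
    (hdeg : ∀ s, (P s).totalDegree ≤ a)
    (hP : ∀ x s, h x s = MvPolynomial.eval (fun i => x i) (P s)) :
    ∃ c₁, EtaWeaklyDependent μ (fun t ω => h (X t ω))
      (fun r => η r ^ ((p - a) / (p - 1))) c₁ :=
  ⟨_, hX.comp_lipschitzGrowthWith hXm hp hap hint hB (lipschitzGrowthWith_of_eval hdeg hP)⟩

end Heredity

/-- Hereditary property of η-weak dependence under a polynomial transformation
(Corollary 2.9 of Curato–Stelzer). -/
theorem eta_hereditary_polynomial
    {Ω : Type*} [MeasurableSpace Ω] (μ : Measure Ω) [IsProbabilityMeasure μ]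
    {n m : ℕ} (X : ℝ → Ω → EuclideanSpace ℝ (Fin n))
    (hXmeas : ∀ t, Measurable (X t))
    (hstat : StrictlyStationary μ X)
    (p C : ℝ) (hp : 1 < p) (hC : 0 < C)
    (hint : Integrable (fun ω => ‖X 0 ω‖ ^ p) μ)
    (hmom : (∫ ω, ‖X 0 ω‖ ^ p ∂μ) ^ (1 / p) ≤ C)
    (h : EuclideanSpace ℝ (Fin n) → EuclideanSpace ℝ (Fin m))
    (a : ℕ) (ha : 1 ≤ a) (hap : (a : ℝ) < p)
    (h0 : h 0 = 0)
    (P : Fin m → MvPolynomial (Fin n) ℝ)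
    (hdeg : ∀ s, (P s).totalDegree ≤ a)
    (hP : ∀ (x : EuclideanSpace ℝ (Fin n)) (s : Fin m),
      h x s = MvPolynomial.eval (fun i => x i) (P s))
    (ηX : ℝ → ℝ) (c₀ : ℝ)
    (hX : EtaWeaklyDependent μ X ηX c₀) :
    ∃ C' c₁ : ℝ, 0 ≤ C' ∧
      EtaWeaklyDependent μ (fun t ω => h (X t ω))
        (fun r => C' * ηX r ^ ((p - (a : ℝ)) / (p - 1))) c₁ := by
  have hid (t : ℝ) : IdentDistrib (fun ω => ‖X t ω‖ ^ p) (fun ω => ‖X 0 ω‖ ^ p) μ μ :=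
    (hstat.identDistrib t 0).comp (u := fun x => ‖x‖ ^ p) (by fun_prop)
  obtain ⟨c₁, hY⟩ := eta_hereditary_polynomial_general hX (fun t => (hXmeas t).aemeasurable) hp hap
    (fun t => (hid t).integrable_iff.2 hint) (fun t => (hid t).integral_eq.le) h P hdeg hP
  exact ⟨1, c₁, zero_le_one, by simpa only [one_mul] using hY⟩

end
end

section
/- Let (X_t)_{t∈ℝ} be an ℝ^n-valued process and ψ : [0,∞) → [0,∞) a function. Suppose that for every m ≥ 0 there is an ℝ^n-valued family (X_t^{(m)})_{t∈ℝ} on the same probability space such that (i) E‖X_t − X_t^{(m)}‖ ≤ ψ(m) for all t ∈ ℝ, and (ii) for all u,v ∈ ℕ* and all real indices i_1 ≤ … ≤ i_u and j_1 ≤ … ≤ j_v with j_1 − i_u ≥ 2m, the random vectors (X^{(m)}_{i_1},…,X^{(m)}_{i_u}) and (X^{(m)}_{j_1},…,X^{(m)}_{j_v}) are independent. Then for all u,v ∈ ℕ*, all r ≥ 0, all real indices i_1 ≤ … ≤ i_u ≤ i_u + r ≤ j_1 ≤ … ≤ j_v, and all Lipschitz functions F : (ℝ^n)^u → ℝ and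 G : (ℝ^n)^v → ℝ with ‖F‖_∞ ≤ 1 and ‖G‖_∞ ≤ 1, one has |Cov(F(X_{i_1},…,X_{i_u}), G(X_{j_1},…,X_{j_v}))| ≤ 2 ( u Lip(F) + v Lip(G) ) ψ(r/2). Consequently, if ψ(m) → 0 as m → ∞, the process X is η-weakly dependent with coefficients η(r) = ψ(r/2) and constant 2. -/
open MeasureTheory ProbabilityTheory Filter

noncomputable section

/-!
Put `m = r / 2` and write `U = F(X)`, `V = G(X)`, `U' = F(X^(m))`, `V' = G(X^(m))`. The variables
`U'` and `V'` are independent, so bilinearity gives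
`Cov(U, V) = Cov(U - U', V) + Cov(U', V - V')`. A covariance against a variable bounded by `1` is at
most twice the `L¹` norm of the other one, and the Lipschitz property bounds
`E|U - U'|` by `u Lip(F) ψ(m)` and `E|V - V'|` by `v Lip(G) ψ(m)`.
-/

section Covariance

variable {Ω : Type*} [MeasurableSpace Ω] {μ : Measure Ω} [IsProbabilityMeasure μ]
  {U V U' V' : Ω → ℝ} {A B : ℝ}

theorem cov_eq_covariance (hU : MemLp U 2 μ) (hV : MemLp V 2 μ) :
    cov μ U V = cov[U, V; μ] :=
  (covariance_eq_sub hU hV).symm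

theorem abs_covariance_le_two_mul_integral_abs (hU : MemLp U 2 μ)
    (hV : AEStronglyMeasurable V μ) (hVB : ∀ᵐ ω ∂μ, |V ω| ≤ B) :
    |cov[U, V; μ]| ≤ 2 * (B * ∫ ω, |U ω| ∂μ) := by
  have hU_int : Integrable U μ := hU.integrable one_le_two
  have h_prod : |∫ ω, U ω * V ω ∂μ| ≤ B * ∫ ω, |U ω| ∂μ := by
    rw [← integral_const_mul]
    refine norm_integral_le_of_norm_le (f := fun ω => U ω * V ω) (hU_int.abs.const_mul B) ?_
    filter_upwards [hVB] with ω hω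
    rw [Real.norm_eq_abs, abs_mul, mul_comm]
    gcongr
  have h_mean : |∫ ω, V ω ∂μ| ≤ B := by
    simpa using norm_integral_le_of_norm_le_const (f := V) hVB
  calc |cov[U, V; μ]|
      = |(∫ ω, U ω * V ω ∂μ) - (∫ ω, U ω ∂μ) * ∫ ω, V ω ∂μ| := by
        rw [covariance_eq_sub hU (.of_bound hV B hVB)]; rfl
    _ ≤ |∫ ω, U ω * V ω ∂μ| + |∫ ω, V ω ∂μ| * |∫ ω, U ω ∂μ| := by
        rw [← abs_mul, mul_comm (∫ ω, V ω ∂μ)]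
        exact abs_sub _ _
    _ ≤ B * ∫ ω, |U ω| ∂μ + B * ∫ ω, |U ω| ∂μ := by
        gcongr
        · exact (abs_nonneg _).trans h_mean
        · exact abs_integral_le_integral_abs
    _ = 2 * (B * ∫ ω, |U ω| ∂μ) := by ring

theorem abs_covariance_sub_covariance_le (hU : MemLp U 2 μ) (hV' : MemLp V' 2 μ)
    (hU' : AEStronglyMeasurable U' μ) (hV : AEStronglyMeasurable V μ)
    (hU'A : ∀ᵐ ω ∂μ, |U' ω| ≤ A) (hVB : ∀ᵐ ω ∂μ, |V ω| ≤ B) :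
    |cov[U, V; μ] - cov[U', V'; μ]| ≤
      2 * (B * ∫ ω, |U ω - U' ω| ∂μ) + 2 * (A * ∫ ω, |V ω - V' ω| ∂μ) := by
  have hU'_memLp : MemLp U' 2 μ := .of_bound hU' A hU'A
  have hV_memLp : MemLp V 2 μ := .of_bound hV B hVB
  have h_split : cov[U, V; μ] - cov[U', V'; μ] = cov[U - U', V; μ] + cov[V - V', U'; μ] := by
    rw [covariance_sub_left hU hU'_memLp hV_memLp, covariance_sub_left hV_memLp hV' hU'_memLp,
      covariance_comm V U', covariance_comm V' U']
    ring
  rw [h_split]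
  exact (abs_add_le _ _).trans <| add_le_add
    (abs_covariance_le_two_mul_integral_abs (hU.sub hU'_memLp) hV hVB)
    (abs_covariance_le_two_mul_integral_abs (hV_memLp.sub hV') hU' hU'A)

end Covariance

section Functionals

theorem memLp_comp_pi_of_bounded {Ω : Type*} [MeasurableSpace Ω] {μ : Measure Ω}
    [IsFiniteMeasure μ] {ι : Type*} [Countable ι] {E : ι → Type*} [∀ a, MeasurableSpace (E a)]
    {Y : ∀ a, Ω → E a} (hY : ∀ a, AEMeasurable (Y a) μ) {F : (∀ a, E a) → ℝ} (hF : Measurable F)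
    {C : ℝ} (hFC : ∀ x, |F x| ≤ C) (p : ENNReal) :
    MemLp (fun ω => F fun a => Y a ω) p μ :=
  .of_bound (hF.comp_aemeasurable (aemeasurable_pi_lambda _ hY)).aestronglyMeasurable C
    (ae_of_all _ fun _ => hFC _)

variable {Ω : Type*} [MeasurableSpace Ω] {μ : Measure Ω} {E E' : Type*}
  [NormedAddCommGroup E] [NormedAddCommGroup E'] {u v : ℕ}

theorem Delta1Lip.integral_abs_comp_sub_comp_le {F : (Fin u → E) → ℝ} {L c : ℝ}
    (hF : Delta1Lip F L) {Y Z : Fin u → Ω → E}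
    (h_int : ∀ a, Integrable (fun ω => ‖Y a ω - Z a ω‖) μ)
    (h_le : ∀ a, ∫ ω, ‖Y a ω - Z a ω‖ ∂μ ≤ c) :
    ∫ ω, |F (fun a => Y a ω) - F (fun a => Z a ω)| ∂μ ≤ u * L * c := by
  have hL : 0 ≤ L := hF.1
  calc ∫ ω, |F (fun a => Y a ω) - F (fun a => Z a ω)| ∂μ
      ≤ ∫ ω, L * ∑ a, ‖Y a ω - Z a ω‖ ∂μ :=
        integral_mono_of_nonneg (ae_of_all _ fun _ => abs_nonneg _)
          ((integrable_finsetSum _ fun a _ => h_int a).const_mul L)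
          (ae_of_all _ fun _ => hF.2 _ _)
    _ = L * ∑ a, ∫ ω, ‖Y a ω - Z a ω‖ ∂μ := by
        rw [integral_const_mul, integral_finsetSum _ fun a _ => h_int a]
    _ ≤ L * ∑ _a : Fin u, c := by gcongr with a; exact h_le a
    _ = u * L * c := by
        rw [Finset.sum_const, Finset.card_fin, nsmul_eq_mul]
        ring

variable [MeasurableSpace E] [MeasurableSpace E']

theorem abs_cov_comp_le_of_indepFun [IsProbabilityMeasure μ]
    {Y Z : Fin u → Ω → E} {Y' Z' : Fin v → Ω → E'} {c c' : ℝ}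
    (hY : ∀ a, AEMeasurable (Y a) μ) (hZ : ∀ a, AEMeasurable (Z a) μ)
    (hY' : ∀ b, AEMeasurable (Y' b) μ) (hZ' : ∀ b, AEMeasurable (Z' b) μ)
    (hYZ : ∀ a, Integrable (fun ω => ‖Y a ω - Z a ω‖) μ ∧ ∫ ω, ‖Y a ω - Z a ω‖ ∂μ ≤ c)
    (hYZ' : ∀ b, Integrable (fun ω => ‖Y' b ω - Z' b ω‖) μ ∧ ∫ ω, ‖Y' b ω - Z' b ω‖ ∂μ ≤ c')
    (h_indep : IndepFun (fun ω a => Z a ω) (fun ω b => Z' b ω) μ)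
    {F : (Fin u → E) → ℝ} {G : (Fin v → E') → ℝ} {A B L L' : ℝ}
    (hF : Measurable F) (hG : Measurable G) (hFA : ∀ x, |F x| ≤ A) (hGB : ∀ x, |G x| ≤ B)
    (hFL : Delta1Lip F L) (hGL : Delta1Lip G L') :
    |cov μ (fun ω => F fun a => Y a ω) (fun ω => G fun b => Y' b ω)| ≤
      2 * (B * (u * L * c)) + 2 * (A * (v * L' * c')) := by
  have hFY : MemLp (fun ω => F fun a => Y a ω) 2 μ := memLp_comp_pi_of_bounded hY hF hFA 2
  have hFZ : MemLp (fun ω => F fun a => Z a ω) 2 μ := memLp_comp_pi_of_bounded hZ hF hFA 2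
  have hGY : MemLp (fun ω => G fun b => Y' b ω) 2 μ := memLp_comp_pi_of_bounded hY' hG hGB 2
  have hGZ : MemLp (fun ω => G fun b => Z' b ω) 2 μ := memLp_comp_pi_of_bounded hZ' hG hGB 2
  have hA : 0 ≤ A := (abs_nonneg _).trans (hFA 0)
  have hB : 0 ≤ B := (abs_nonneg _).trans (hGB 0)
  have h_uncorr : cov[fun ω => F fun a => Z a ω, fun ω => G fun b => Z' b ω; μ] = 0 :=
    (h_indep.comp hF hG).covariance_eq_zero hFZ hGZ
  have h_diff := abs_covariance_sub_covariance_le hFY hGZ hFZ.aestronglyMeasurable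
    hGY.aestronglyMeasurable (ae_of_all _ fun _ => hFA _) (ae_of_all _ fun _ => hGB _)
  rw [h_uncorr, sub_zero, ← cov_eq_covariance hFY hGY] at h_diff
  refine h_diff.trans ?_
  gcongr
  · exact hFL.integral_abs_comp_sub_comp_le (fun a => (hYZ a).1) fun a => (hYZ a).2
  · exact hGL.integral_abs_comp_sub_comp_le (fun b => (hYZ' b).1) fun b => (hYZ' b).2

end Functionals

/-- The covariance inequality in the definition of η-weak dependence, without the requirement that
the coefficients decay. It is the last clause of `EtaWeaklyDependent`. -/
def EtaCovarianceBound {Ω : Type*} [MeasurableSpace Ω] (μ : Measure Ω)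
    {E : Type*} [NormedAddCommGroup E] [MeasurableSpace E]
    (X : ℝ → Ω → E) (η : ℝ → ℝ) (c₀ : ℝ) : Prop :=
  ∀ (u v : ℕ), 0 < u → 0 < v → ∀ r : ℝ, 0 ≤ r →
    ∀ (i : Fin u → ℝ) (j : Fin v → ℝ), Monotone i → Monotone j →
      (∀ a b, i a + r ≤ j b) →
      ∀ (F : (Fin u → E) → ℝ) (G : (Fin v → E) → ℝ) (LF LG : ℝ),
        Measurable F → Measurable G →
        (∀ x, |F x| ≤ 1) → (∀ x, |G x| ≤ 1) →
        Delta1Lip F LF → Delta1Lip G LG →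
        |cov μ (fun ω => F fun a => X (i a) ω) (fun ω => G fun b => X (j b) ω)| ≤
          c₀ * ((u : ℝ) * LF + (v : ℝ) * LG) * η r

theorem eta_weak_dependence_of_coupling_general
    {Ω : Type*} [MeasurableSpace Ω] (μ : Measure Ω) [IsProbabilityMeasure μ]
    {E : Type*} [NormedAddCommGroup E] [MeasurableSpace E] (X : ℝ → Ω → E)
    (hX : ∀ t, AEMeasurable (X t) μ)
    (ψ : ℝ → ℝ) (hψ0 : ∀ m, 0 ≤ ψ m)
    (Xm : ℝ → ℝ → Ω → E)
    (hXm : ∀ m t, AEMeasurable (Xm m t) μ)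
    (happrox : ∀ m, 0 ≤ m → ∀ t : ℝ,
      Integrable (fun ω => ‖X t ω - Xm m t ω‖) μ ∧
        (∫ ω, ‖X t ω - Xm m t ω‖ ∂μ) ≤ ψ m)
    (hindep : ∀ m, 0 ≤ m → ∀ (u v : ℕ), 0 < u → 0 < v →
      ∀ (i : Fin u → ℝ) (j : Fin v → ℝ), Monotone i → Monotone j →
        (∀ a b, i a + 2 * m ≤ j b) →
        IndepFun (fun ω (a : Fin u) => Xm m (i a) ω)
          (fun ω (b : Fin v) => Xm m (j b) ω) μ) :
    EtaCovarianceBound μ X (fun r => ψ (r / 2)) 2 ∧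
      (Tendsto ψ atTop (nhds 0) → EtaWeaklyDependent μ X (fun r => ψ (r / 2)) 2) := by
  have h_bound : EtaCovarianceBound μ X (fun r => ψ (r / 2)) 2 := by
    intro u v hu hv r hr i j hi hj hij F G LF LG hF hG hF1 hG1 hFL hGL
    have hm : 0 ≤ r / 2 := by positivity
    have h_gap : ∀ a b, i a + 2 * (r / 2) ≤ j b := fun a b => by linarith [hij a b]
    refine (abs_cov_comp_le_of_indepFun (fun _ => hX _) (fun _ => hXm _ _) (fun _ => hX _)
      (fun _ => hXm _ _) (fun _ => happrox _ hm _) (fun _ => happrox _ hm _)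
      (hindep _ hm u v hu hv i j hi hj h_gap) hF hG hF1 hG1 hFL hGL).trans_eq ?_
    ring
  exact ⟨h_bound, fun hψ => ⟨zero_le_two, fun _ => hψ0 _,
    hψ.comp (tendsto_id.atTop_div_const two_pos), h_bound⟩⟩

/-- Coupling criterion for η-weak dependence: if for every `m ≥ 0` there is a family
`X^(m)` that is `ψ(m)`-close to `X` in `L¹` and whose past and future marginals separated by
a gap `2m` are independent, then the η-weak dependence inequality holds with `η(r) = ψ(r/2)`
and constant `2`. -/
theorem eta_weak_dependence_of_coupling
    {Ω : Type*} [MeasurableSpace Ω] (μ : Measure Ω) [IsProbabilityMeasure μ]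
    {n : ℕ} (X : ℝ → Ω → EuclideanSpace ℝ (Fin n))
    (hX : ∀ t, Measurable (X t))
    (ψ : ℝ → ℝ) (hψ0 : ∀ m, 0 ≤ ψ m)
    (Xm : ℝ → ℝ → Ω → EuclideanSpace ℝ (Fin n))
    (hXm : ∀ m t, Measurable (Xm m t))
    (happrox : ∀ m, 0 ≤ m → ∀ t : ℝ,
      Integrable (fun ω => ‖X t ω - Xm m t ω‖) μ ∧
        (∫ ω, ‖X t ω - Xm m t ω‖ ∂μ) ≤ ψ m)
    (hindep : ∀ m, 0 ≤ m → ∀ (u v : ℕ), 0 < u → 0 < v →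
      ∀ (i : Fin u → ℝ) (j : Fin v → ℝ), Monotone i → Monotone j →
        (∀ a b, i a + 2 * m ≤ j b) →
        IndepFun (fun ω (a : Fin u) => Xm m (i a) ω)
          (fun ω (b : Fin v) => Xm m (j b) ω) μ) :
    (∀ (u v : ℕ), 0 < u → 0 < v → ∀ r : ℝ, 0 ≤ r →
      ∀ (i : Fin u → ℝ) (j : Fin v → ℝ), Monotone i → Monotone j →
        (∀ a b, i a + r ≤ j b) →
        ∀ (F : (Fin u → EuclideanSpace ℝ (Fin n)) → ℝ)
          (G : (Fin v → EuclideanSpace ℝ (Fin n)) → ℝ) (LF LG : ℝ),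
          Measurable F → Measurable G →
          (∀ x, |F x| ≤ 1) → (∀ x, |G x| ≤ 1) →
          Delta1Lip F LF → Delta1Lip G LG →
          |cov μ (fun ω => F fun a => X (i a) ω) (fun ω => G fun b => X (j b) ω)| ≤
            2 * ((u : ℝ) * LF + (v : ℝ) * LG) * ψ (r / 2)) ∧
      (Tendsto ψ atTop (nhds 0) →
        EtaWeaklyDependent μ X (fun r => ψ (r / 2)) 2) :=
  eta_weak_dependence_of_coupling_general μ X (fun t => (hX t).aemeasurable) ψ hψ0 Xm
    (fun m t => (hXm m t).aemeasurable) happrox hindep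

end
end
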